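/- Let X, X̂ ∈ ℝ^{B×d} have all rows of ℓ² norm at most R, and let W_Q, W_K ∈ ℝ^{d×d}. For each i define the attention row a_i = softmax(x_i W_Q (X W_K)ᵀ / √d) ∈ ℝ^B, where x_i is the i-th row of X, and define â_i analogously from X̂. Then Σ_{i=1}^B ‖a_i − â_i‖₁ ≤ (2 B R ‖W_Q‖₂ ‖W_K‖₂ / √d) Σ_{i=1}^B ‖x_i − x̂_i‖₂. -/

import Mathlib

/-!
The proof has two ingredients.

*Softmax is 1-Lipschitz for the ℓ¹ norm.* For `p = softmax z`, `q = softmax w` the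
numbers `log p_j - log q_j - (z_j - w_j)` do not depend on `j`, and `∑ (p_j - q_j) = 0`, so
`∑ (p_j - q_j)(log p_j - log q_j) = ∑ (p_j - q_j)(z_j - w_j)`. The left side is at least
`∑ 2 (p_j - q_j)² / (p_j + q_j)` (from `log (1 + x) ≥ 2x / (x + 2)`), which by Cauchy–Schwarz is at
least `‖p - q‖₁²`. The right side is at most `‖p - q‖₁ ‖z - w‖₁`. Divide by `‖p - q‖₁`.

*Logits are bilinear.* Splitting
`⟨x W_Q, y W_K⟩ - ⟨x' W_Q, y' W_K⟩ = ⟨(x - x') W_Q, y W_K⟩ + ⟨x' W_Q, (y - y') W_K⟩`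
bounds the `(i, j)` logit difference by `R ‖W_Q‖ ‖W_K‖ (Δ_i + Δ_j) / √d`, where
`Δ_i = ‖x_i - x̂_i‖₂`. Finally `∑_i ∑_j (Δ_i + Δ_j) = 2 B ∑_i Δ_i`.
-/

open scoped BigOperators
open Matrix

/-- Softmax of a vector. -/
noncomputable def softmax {n : ℕ} (z : Fin n → ℝ) : Fin n → ℝ :=
  fun j => Real.exp (z j) / ∑ k, Real.exp (z k)

/-- ℓ¹ norm. -/
noncomputable def l1 {n : ℕ} (v : Fin n → ℝ) : ℝ := ∑ j, |v j|

/-- ℓ² (Euclidean) norm. -/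
noncomputable def l2 {n : ℕ} (v : Fin n → ℝ) : ℝ := Real.sqrt (∑ j, v j ^ 2)

/-- ℓ^∞ norm. -/
noncomputable def linf {n : ℕ} (v : Fin n → ℝ) : ℝ := ⨆ j, |v j|

/-- Spectral norm (operator ℓ²→ℓ² norm) of a matrix acting on row vectors. -/
noncomputable def spec {m n : ℕ} (W : Matrix (Fin m) (Fin n) ℝ) : ℝ :=
  sSup {c | ∃ x : Fin m → ℝ, l2 x ≤ 1 ∧ c = l2 (x ᵥ* W)}

/-- Frobenius norm of a matrix. -/
noncomputable def frob {m n : ℕ} (W : Matrix (Fin m) (Fin n) ℝ) : ℝ :=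
  Real.sqrt (∑ i, ∑ j, W i j ^ 2)

/-- Operator norm of `h ↦ h Eᵀ` from ℓ² to ℓ¹. -/
noncomputable def opNorm21 {m d : ℕ} (E : Matrix (Fin m) (Fin d) ℝ) : ℝ :=
  sSup {c | ∃ h : Fin d → ℝ, l2 h ≤ 1 ∧ c = l1 (h ᵥ* Eᵀ)}

/-- Operator norm of `h ↦ h Eᵀ` from ℓ² to ℓ^∞. -/
noncomputable def opNorm2inf {m d : ℕ} (E : Matrix (Fin m) (Fin d) ℝ) : ℝ :=
  sSup {c | ∃ h : Fin d → ℝ, l2 h ≤ 1 ∧ c = linf (h ᵥ* Eᵀ)}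

/-- Condition number `κ(W) = σ_max(W)/σ_min(W)` of an invertible matrix,
expressed as `σ_max(W) · σ_max(W⁻¹)`. -/
noncomputable def condNum {d : ℕ} (W : Matrix (Fin d) (Fin d) ℝ) : ℝ := spec W * spec W⁻¹

lemma l2_nonneg {n : ℕ} (v : Fin n → ℝ) : 0 ≤ l2 v := Real.sqrt_nonneg _

lemma l2_sq {n : ℕ} (v : Fin n → ℝ) : l2 v ^ 2 = ∑ j, v j ^ 2 :=
  Real.sq_sqrt (Finset.sum_nonneg fun _ _ => sq_nonneg _)

lemma l2_smul {n : ℕ} (c : ℝ) (v : Fin n → ℝ) : l2 (c • v) = |c| * l2 v := by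
  unfold l2
  simp only [Pi.smul_apply, smul_eq_mul, mul_pow, ← Finset.mul_sum]
  rw [Real.sqrt_mul (sq_nonneg c), Real.sqrt_sq_eq_abs]

lemma abs_dot_le {n : ℕ} (u v : Fin n → ℝ) : |u ⬝ᵥ v| ≤ l2 u * l2 v := by
  apply abs_le_of_sq_le_sq _ (mul_nonneg (l2_nonneg u) (l2_nonneg v))
  rw [mul_pow, l2_sq, l2_sq]
  exact Finset.sum_mul_sq_le_sq_mul_sq _ _ _

lemma l2_vecMul_le_frob {m n : ℕ} (x : Fin m → ℝ) (W : Matrix (Fin m) (Fin n) ℝ) :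
    l2 (x ᵥ* W) ≤ l2 x * frob W := by
  refine Real.sqrt_le_iff.mpr ⟨mul_nonneg (l2_nonneg x) (Real.sqrt_nonneg _), ?_⟩
  have hf : frob W ^ 2 = ∑ j, ∑ i, W i j ^ 2 := by
    rw [Finset.sum_comm]
    exact Real.sq_sqrt (Finset.sum_nonneg fun _ _ => Finset.sum_nonneg fun _ _ => sq_nonneg _)
  rw [mul_pow, l2_sq, hf, Finset.mul_sum]
  exact Finset.sum_le_sum fun j _ =>
    Finset.sum_mul_sq_le_sq_mul_sq Finset.univ x (fun i => W i j)

/-- The set whose supremum defines `spec W` is bounded, so that `spec W` is not a junk value. -/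
lemma spec_bddAbove {m n : ℕ} (W : Matrix (Fin m) (Fin n) ℝ) :
    BddAbove {c | ∃ x : Fin m → ℝ, l2 x ≤ 1 ∧ c = l2 (x ᵥ* W)} := by
  refine ⟨frob W, ?_⟩
  rintro c ⟨x, hx, rfl⟩
  have hW : 0 ≤ frob W := Real.sqrt_nonneg _
  calc l2 (x ᵥ* W) ≤ l2 x * frob W := l2_vecMul_le_frob x W
    _ ≤ 1 * frob W := by gcongr
    _ = frob W := one_mul _

lemma spec_nonneg {m n : ℕ} (W : Matrix (Fin m) (Fin n) ℝ) : 0 ≤ spec W := by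
  apply Real.sSup_nonneg
  rintro c ⟨x, -, rfl⟩
  exact l2_nonneg _

lemma l2_vecMul_le {m n : ℕ} (x : Fin m → ℝ) (W : Matrix (Fin m) (Fin n) ℝ) :
    l2 (x ᵥ* W) ≤ l2 x * spec W := by
  rcases (l2_nonneg x).eq_or_lt with h | h
  · have := l2_vecMul_le_frob x W
    rw [← h, zero_mul] at this ⊢
    exact this
  · have hmem : l2 (((l2 x)⁻¹ • x) ᵥ* W) ≤ spec W := by
      refine le_csSup (spec_bddAbove W) ⟨_, ?_, rfl⟩
      rw [l2_smul, abs_of_pos (inv_pos.mpr h), inv_mul_cancel₀ h.ne']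
    rw [Matrix.smul_vecMul, l2_smul, abs_of_pos (inv_pos.mpr h)] at hmem
    rwa [inv_mul_le_iff₀ h] at hmem

lemma two_sq_div_le_of_le {p q : ℝ} (hq : 0 < q) (hqp : q ≤ p) :
    2 * (p - q) ^ 2 / (p + q) ≤ (p - q) * (Real.log p - Real.log q) := by
  have hp : 0 < p := hq.trans_le hqp
  have h := Real.le_log_one_add_of_nonneg (x := (p - q) / q)
    (div_nonneg (sub_nonneg.mpr hqp) hq.le)
  have e1 : 1 + (p - q) / q = p / q := by field_simp; ring
  have e2 : 2 * ((p - q) / q) / ((p - q) / q + 2) = 2 * (p - q) / (p + q) := by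
    have : (p - q) / q + 2 = (p + q) / q := by field_simp; ring
    rw [this]
    field_simp
  rw [e1, e2, Real.log_div hp.ne' hq.ne'] at h
  calc 2 * (p - q) ^ 2 / (p + q) = (p - q) * (2 * (p - q) / (p + q)) := by ring
    _ ≤ _ := mul_le_mul_of_nonneg_left h (sub_nonneg.mpr hqp)

/-- The logarithmic mean of two positive numbers is at most their arithmetic mean,
multiplied out so that no division by `p - q` or `log p - log q` occurs. -/
lemma two_sq_div_le {p q : ℝ} (hp : 0 < p) (hq : 0 < q) :
    2 * (p - q) ^ 2 / (p + q) ≤ (p - q) * (Real.log p - Real.log q) := by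
  rcases le_total q p with h | h
  · exact two_sq_div_le_of_le hq h
  · have := two_sq_div_le_of_le hp h
    rw [add_comm q p, sub_sq_comm q p] at this
    linarith

/-- A Pinsker-type lower bound for the symmetrized Kullback–Leibler divergence of two positive
probability vectors. -/
lemma sq_l1_le_jeffreys {n : ℕ} (p q : Fin n → ℝ) (hp : ∀ j, 0 < p j) (hq : ∀ j, 0 < q j)
    (hps : ∑ j, p j = 1) (hqs : ∑ j, q j = 1) :
    l1 (fun j => p j - q j) ^ 2
      ≤ ∑ j, (p j - q j) * (Real.log (p j) - Real.log (q j)) := by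
  have hcs := Finset.sum_sq_le_sum_mul_sum_of_sq_le_mul Finset.univ
    (r := fun j => |p j - q j|) (f := fun j => (p j - q j) ^ 2 / (p j + q j))
    (g := fun j => p j + q j)
    (fun j _ => div_nonneg (sq_nonneg _) (add_pos (hp j) (hq j)).le)
    (fun j _ => (add_pos (hp j) (hq j)).le)
    (fun j _ => le_of_eq <| by
      have := (add_pos (hp j) (hq j)).ne'
      simp only [sq_abs]
      field_simp)
  rw [Finset.sum_add_distrib, hps, hqs] at hcs
  calc l1 (fun j => p j - q j) ^ 2
      ≤ (∑ j, (p j - q j) ^ 2 / (p j + q j)) * (1 + 1) := hcs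
    _ = ∑ j, 2 * (p j - q j) ^ 2 / (p j + q j) := by
        rw [Finset.sum_mul]
        exact Finset.sum_congr rfl fun j _ => by ring
    _ ≤ _ := Finset.sum_le_sum fun j _ => two_sq_div_le (hp j) (hq j)

lemma sum_exp_pos {n : ℕ} (z : Fin n → ℝ) (j : Fin n) : 0 < ∑ k, Real.exp (z k) :=
  Finset.sum_pos (fun _ _ => Real.exp_pos _) ⟨j, Finset.mem_univ j⟩

lemma softmax_pos {n : ℕ} (z : Fin n → ℝ) (j : Fin n) : 0 < softmax z j :=
  div_pos (Real.exp_pos _) (sum_exp_pos z j)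

lemma sum_softmax {n : ℕ} (z : Fin n → ℝ) (j : Fin n) : ∑ k, softmax z k = 1 := by
  unfold softmax
  rw [← Finset.sum_div, div_self (sum_exp_pos z j).ne']

lemma log_softmax {n : ℕ} (z : Fin n → ℝ) (j : Fin n) :
    Real.log (softmax z j) = z j - Real.log (∑ k, Real.exp (z k)) := by
  unfold softmax
  rw [Real.log_div (Real.exp_pos _).ne' (sum_exp_pos z j).ne', Real.log_exp]

/-- Softmax is 1-Lipschitz for the ℓ¹ norm. -/
lemma softmax_l1_le {n : ℕ} (z w : Fin n → ℝ) :
    l1 (fun j => softmax z j - softmax w j) ≤ ∑ j, |z j - w j| := by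
  rcases isEmpty_or_nonempty (Fin n) with hn | ⟨⟨j₀⟩⟩
  · simp [l1]
  have hJ := sq_l1_le_jeffreys (softmax z) (softmax w) (softmax_pos z) (softmax_pos w)
    (sum_softmax z j₀) (sum_softmax w j₀)
  set L := l1 (fun j => softmax z j - softmax w j) with hL
  have hL0 : 0 ≤ L := Finset.sum_nonneg fun _ _ => abs_nonneg _
  -- The log-partition functions drop out because `softmax z - softmax w` sums to zero.
  have hlin : ∑ j, (softmax z j - softmax w j) *
        (Real.log (softmax z j) - Real.log (softmax w j))
      = ∑ j, (softmax z j - softmax w j) * (z j - w j) := by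
    set c := Real.log (∑ k, Real.exp (w k)) - Real.log (∑ k, Real.exp (z k)) with hc
    have h0 : ∑ j, (softmax z j - softmax w j) * c = 0 := by
      rw [← Finset.sum_mul, Finset.sum_sub_distrib, sum_softmax z j₀, sum_softmax w j₀]
      ring
    rw [← add_zero (∑ j, (softmax z j - softmax w j) * (z j - w j)), ← h0,
      ← Finset.sum_add_distrib]
    refine Finset.sum_congr rfl fun j _ => ?_
    rw [log_softmax, log_softmax, hc]
    ring
  have hup : ∑ j, (softmax z j - softmax w j) * (z j - w j) ≤ L * ∑ j, |z j - w j| := by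
    rw [hL, l1, Finset.sum_mul]
    refine Finset.sum_le_sum fun j _ => (le_abs_self _).trans ?_
    rw [abs_mul]
    exact mul_le_mul_of_nonneg_left
      (Finset.single_le_sum (f := fun j => |z j - w j|) (fun _ _ => abs_nonneg _)
        (Finset.mem_univ j)) (abs_nonneg _)
  rw [hlin] at hJ
  rcases hL0.eq_or_lt with h | h
  · rw [← h]
    exact Finset.sum_nonneg fun _ _ => abs_nonneg _
  · refine le_of_mul_le_mul_left ?_ h
    calc L * L = L ^ 2 := (sq L).symm
      _ ≤ _ := hJ.trans hup

lemma bilin_diff_le {d : ℕ} {R : ℝ} (x x' y y' : Fin d → ℝ) (hy : l2 y ≤ R) (hx' : l2 x' ≤ R)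
    (WQ WK : Matrix (Fin d) (Fin d) ℝ) :
    |(x ᵥ* WQ) ⬝ᵥ (y ᵥ* WK) - (x' ᵥ* WQ) ⬝ᵥ (y' ᵥ* WK)|
      ≤ R * spec WQ * spec WK * (l2 (x - x') + l2 (y - y')) := by
  have hQ := spec_nonneg WQ
  have hK := spec_nonneg WK
  have key : ∀ u v : Fin d → ℝ,
      |(u ᵥ* WQ) ⬝ᵥ (v ᵥ* WK)| ≤ (l2 u * spec WQ) * (l2 v * spec WK) := fun u v =>
    (abs_dot_le _ _).trans (mul_le_mul (l2_vecMul_le u WQ) (l2_vecMul_le v WK) (l2_nonneg _)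
      (mul_nonneg (l2_nonneg u) hQ))
  have hsplit : (x ᵥ* WQ) ⬝ᵥ (y ᵥ* WK) - (x' ᵥ* WQ) ⬝ᵥ (y' ᵥ* WK)
      = ((x - x') ᵥ* WQ) ⬝ᵥ (y ᵥ* WK) + (x' ᵥ* WQ) ⬝ᵥ ((y - y') ᵥ* WK) := by
    simp only [Matrix.sub_vecMul, sub_dotProduct, dotProduct_sub]
    ring
  have hx0 := l2_nonneg (x - x')
  have hy0 := l2_nonneg (y - y')
  rw [hsplit]
  calc _ ≤ _ := abs_add_le _ _
    _ ≤ (l2 (x - x') * spec WQ) * (l2 y * spec WK)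
        + (l2 x' * spec WQ) * (l2 (y - y') * spec WK) := add_le_add (key _ _) (key _ _)
    _ ≤ (l2 (x - x') * spec WQ) * (R * spec WK)
        + (R * spec WQ) * (l2 (y - y') * spec WK) := by gcongr
    _ = _ := by ring

/-- attention-row ℓ¹ stability bound:
`Σ_i ‖a_i − â_i‖₁ ≤ (2 B R ‖W_Q‖₂ ‖W_K‖₂ / √d) Σ_i ‖x_i − x̂_i‖₂`. -/
theorem attention_rows_l1_bound {B d : ℕ} (R : ℝ)
    (X Xh : Matrix (Fin B) (Fin d) ℝ)
    (hX : ∀ i, l2 (X i) ≤ R) (hXh : ∀ i, l2 (Xh i) ≤ R)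
    (WQ WK : Matrix (Fin d) (Fin d) ℝ) :
    ∑ i, l1 (fun j =>
        softmax (fun j' => ((X i ᵥ* WQ) ᵥ* (X * WK)ᵀ) j' / Real.sqrt d) j
      - softmax (fun j' => ((Xh i ᵥ* WQ) ᵥ* (Xh * WK)ᵀ) j' / Real.sqrt d) j)
    ≤ (2 * B * R * spec WQ * spec WK / Real.sqrt d)
        * ∑ i, l2 (fun k => X i k - Xh i k) := by
  have hlogit : ∀ (Y : Matrix (Fin B) (Fin d) ℝ) (i j : Fin B),
      ((Y i ᵥ* WQ) ᵥ* (Y * WK)ᵀ) j = (Y i ᵥ* WQ) ⬝ᵥ (Y j ᵥ* WK) := fun _ _ _ => rfl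
  set D : Fin B → ℝ := fun i => l2 (fun k => X i k - Xh i k) with hD
  set C : ℝ := R * spec WQ * spec WK / Real.sqrt d with hC
  have hrow : ∀ i, l1 (fun j =>
        softmax (fun j' => ((X i ᵥ* WQ) ᵥ* (X * WK)ᵀ) j' / Real.sqrt d) j
      - softmax (fun j' => ((Xh i ᵥ* WQ) ᵥ* (Xh * WK)ᵀ) j' / Real.sqrt d) j)
      ≤ ∑ j, C * (D i + D j) := by
    intro i
    refine (softmax_l1_le _ _).trans (Finset.sum_le_sum fun j _ => ?_)
    rw [hlogit, hlogit, ← sub_div, abs_div, abs_of_nonneg (Real.sqrt_nonneg _), hC,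
      div_mul_eq_mul_div]
    exact div_le_div_of_nonneg_right
      (bilin_diff_le (X i) (Xh i) (X j) (Xh j) (hX j) (hXh i) WQ WK) (Real.sqrt_nonneg _)
  refine (Finset.sum_le_sum fun i _ => hrow i).trans (le_of_eq ?_)
  simp only [← Finset.mul_sum, Finset.sum_add_distrib, Finset.sum_const, Finset.card_univ,
    Fintype.card_fin, nsmul_eq_mul]
  rw [hC]
  ring
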